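/- Let 𝔥 and ℋ be complex Hilbert spaces, 𝔖 and 𝔰 bounded self-adjoint operators on ℋ, g ∈ 𝔥, and (V_τ)_{τ∈ℝ} a strongly continuous one-parameter group of unitary operators on 𝔥. For z ∈ 𝔥 set α_τ(z) = 2 Re⟨z, V_τ g⟩ and let 𝔘_{t,s}(z) be the propagator generated by τ ↦ 𝔖 + α_τ(z)𝔰. Then for every t ∈ ℝ and all z, z′ ∈ 𝔥, ‖𝔘_{t,0}(z) − 𝔘_{t,0}(z′)‖ ≤ 2‖g‖‖𝔰‖ |t| e^{(‖𝔖‖ + 2‖g‖‖𝔰‖‖z′‖)|t|} ‖z − z′‖; in particular, for each fixed t the map z ↦ 𝔘_{t,0}(z) is continuous from 𝔥 to B(ℋ) in operator norm. -/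

import Mathlib

noncomputable section
open MeasureTheory Complex
open scoped InnerProductSpace

/-- `U` is a norm-continuous (in the first time variable) solution of the Duhamel integral
equation `U t s = 1 - i ∫_s^t H τ * U τ s dτ` (Bochner integral in `B(ℋ)`). -/
def IsPropagator {ℋ : Type*} [NormedAddCommGroup ℋ] [InnerProductSpace ℂ ℋ] [CompleteSpace ℋ]
    (H : ℝ → (ℋ →L[ℂ] ℋ)) (U : ℝ → ℝ → (ℋ →L[ℂ] ℋ)) : Prop :=
  (∀ s : ℝ, Continuous fun t => U t s) ∧
  ∀ s t : ℝ, U t s = 1 - Complex.I • ∫ τ in s..t, (H τ) * (U τ s)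

/-!
Where `H` and `H'` are self-adjoint, the derivative of `τ ↦ (U' τ t)* U τ s` is
`-i (U' τ t)* (H τ - H' τ) U τ s`. For `H = H'` it vanishes, so `U t s` is isometric and
`(U s t)* = U t s`. For general `H'`, integrating from `s` to `t` then gives Duhamel's formula
`U t s - U' t s = -i ∫_s^t U' t τ (H τ - H' τ) U τ s dτ`, in which both propagators are
contractions. No Grönwall argument intervenes, so the Lipschitz constant in `z` grows only
linearly in `|t - s|`.
-/

namespace IsPropagator

variable {ℋ : Type*} [NormedAddCommGroup ℋ] [InnerProductSpace ℂ ℋ] [CompleteSpace ℋ]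
  {H H' : ℝ → (ℋ →L[ℂ] ℋ)} {U U' : ℝ → ℝ → (ℋ →L[ℂ] ℋ)}

theorem apply_self (hU : IsPropagator H U) (s : ℝ) : U s s = 1 := by
  simpa using hU.2 s s

theorem hasDerivAt (hU : IsPropagator H U) (hH : Continuous H) (s t : ℝ) :
    HasDerivAt (fun τ => U τ s) (-(I • (H t * U t s))) t := by
  have hcont : Continuous fun τ => H τ * U τ s := hH.mul (hU.1 s)
  rw [funext (hU.2 s)]
  exact ((hcont.integral_hasStrictDerivAt s t).hasDerivAt.const_smul I).const_sub 1

theorem hasDerivAt_star_mul (hU : IsPropagator H U) (hU' : IsPropagator H' U')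
    (hH : Continuous H) (hH' : Continuous H') (hsa' : ∀ τ, IsSelfAdjoint (H' τ)) (r s t : ℝ) :
    HasDerivAt (fun τ => star (U' τ r) * U τ s)
      (-(I • (star (U' t r) * (H t - H' t) * U t s))) t := by
  refine ((hU'.hasDerivAt hH' r t).star.mul (hU.hasDerivAt hH s t)).congr_deriv ?_
  rw [star_neg, star_smul, star_mul, (hsa' t).star_eq]
  simp only [star_def, conj_I, neg_smul, neg_neg, smul_mul_assoc, mul_neg, mul_smul_comm,
    mul_sub, sub_mul, smul_sub, mul_assoc]
  abel

theorem star_mul_eq_star_mul (hU : IsPropagator H U) (hH : Continuous H)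
    (hsa : ∀ τ, IsSelfAdjoint (H τ)) (r s t t' : ℝ) :
    star (U t r) * U t s = star (U t' r) * U t' s := by
  have hderiv (τ : ℝ) : HasDerivAt (fun τ => star (U τ r) * U τ s) 0 τ := by
    simpa using hU.hasDerivAt_star_mul hU hH hH hsa r s τ
  exact is_const_of_deriv_eq_zero (fun τ => (hderiv τ).differentiableAt)
    (fun τ => (hderiv τ).deriv) t t'

theorem star_mul_self (hU : IsPropagator H U) (hH : Continuous H)
    (hsa : ∀ τ, IsSelfAdjoint (H τ)) (t s : ℝ) : star (U t s) * U t s = 1 := by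
  simpa [hU.apply_self] using hU.star_mul_eq_star_mul hH hsa s s t s

theorem star_apply (hU : IsPropagator H U) (hH : Continuous H)
    (hsa : ∀ τ, IsSelfAdjoint (H τ)) (s t : ℝ) : star (U s t) = U t s := by
  simpa [hU.apply_self] using hU.star_mul_eq_star_mul hH hsa t s s t

theorem norm_le_one (hU : IsPropagator H U) (hH : Continuous H)
    (hsa : ∀ τ, IsSelfAdjoint (H τ)) (t s : ℝ) : ‖U t s‖ ≤ 1 := by
  have hsq : ‖U t s‖ * ‖U t s‖ ≤ 1 := by
    rw [← CStarRing.norm_star_mul_self, hU.star_mul_self hH hsa]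
    exact ContinuousLinearMap.norm_id_le
  exact (mul_self_le_mul_self_iff (norm_nonneg _) zero_le_one).2 (by rwa [one_mul])

theorem sub_eq_integral (hU : IsPropagator H U) (hU' : IsPropagator H' U')
    (hH : Continuous H) (hH' : Continuous H') (hsa' : ∀ τ, IsSelfAdjoint (H' τ)) (t s : ℝ) :
    U t s - U' t s = -(I • ∫ τ in s..t, U' t τ * (H τ - H' τ) * U τ s) := by
  have hcont : Continuous fun τ => -(I • (star (U' τ t) * (H τ - H' τ) * U τ s)) :=
    ((((hU'.1 t).star.mul (hH.sub hH')).mul (hU.1 s)).const_smul I).neg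
  have hftc := intervalIntegral.integral_eq_sub_of_hasDerivAt
    (fun τ _ => hU.hasDerivAt_star_mul hU' hH hH' hsa' t s τ) (hcont.intervalIntegrable s t)
  simpa only [intervalIntegral.integral_neg, intervalIntegral.integral_smul,
    hU'.star_apply hH' hsa', hU.apply_self, hU'.apply_self, star_one, one_mul, mul_one]
    using hftc.symm

theorem norm_sub_le (hU : IsPropagator H U) (hU' : IsPropagator H' U')
    (hH : Continuous H) (hH' : Continuous H') (hsa : ∀ τ, IsSelfAdjoint (H τ))
    (hsa' : ∀ τ, IsSelfAdjoint (H' τ)) {t s ε : ℝ}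
    (hε : ∀ τ ∈ Set.uIoc s t, ‖H τ - H' τ‖ ≤ ε) :
    ‖U t s - U' t s‖ ≤ ε * |t - s| := by
  rw [hU.sub_eq_integral hU' hH hH' hsa', norm_neg, norm_smul, norm_I, one_mul]
  refine intervalIntegral.norm_integral_le_of_norm_le_const fun τ hτ => ?_
  calc ‖U' t τ * (H τ - H' τ) * U τ s‖ ≤ ‖U' t τ‖ * ‖H τ - H' τ‖ * ‖U τ s‖ := norm_mul₃_le
    _ ≤ 1 * ‖H τ - H' τ‖ * 1 := by
        gcongr
        exacts [hU'.norm_le_one hH' hsa' t τ, hU.norm_le_one hH hsa τ s]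
    _ ≤ ε := by simpa using hε τ hτ

end IsPropagator

section EffectiveHamiltonian

variable {𝔥 : Type*} [NormedAddCommGroup 𝔥] [InnerProductSpace ℂ 𝔥]
  {ℋ : Type*} [NormedAddCommGroup ℋ] [InnerProductSpace ℂ ℋ]

/-- The effective spin Hamiltonian `τ ↦ 𝔖 + 2 Re⟨z, G τ⟩ 𝔰` in the classical field `z`. An
arbitrary curve `G` of form factors takes the place of the orbit `τ ↦ V_τ g`. -/
def effectiveHamiltonian (𝔖 𝔰 : ℋ →L[ℂ] ℋ) (G : ℝ → 𝔥) (z : 𝔥) (τ : ℝ) : ℋ →L[ℂ] ℋ :=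
  𝔖 + (2 * (⟪z, G τ⟫_ℂ).re) • 𝔰

theorem continuous_effectiveHamiltonian (𝔖 𝔰 : ℋ →L[ℂ] ℋ) {G : ℝ → 𝔥} (hG : Continuous G)
    (z : 𝔥) : Continuous (effectiveHamiltonian 𝔖 𝔰 G z) := by
  unfold effectiveHamiltonian
  fun_prop

theorem isSelfAdjoint_effectiveHamiltonian [CompleteSpace ℋ] {𝔖 𝔰 : ℋ →L[ℂ] ℋ}
    (h𝔖 : IsSelfAdjoint 𝔖) (h𝔰 : IsSelfAdjoint 𝔰) (G : ℝ → 𝔥) (z : 𝔥) (τ : ℝ) :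
    IsSelfAdjoint (effectiveHamiltonian 𝔖 𝔰 G z τ) :=
  h𝔖.add (.smul (.all _) h𝔰)

theorem norm_effectiveHamiltonian_sub_le (𝔖 𝔰 : ℋ →L[ℂ] ℋ) (G : ℝ → 𝔥) (z z' : 𝔥) (τ : ℝ) :
    ‖effectiveHamiltonian 𝔖 𝔰 G z τ - effectiveHamiltonian 𝔖 𝔰 G z' τ‖ ≤
      2 * ‖G τ‖ * ‖𝔰‖ * ‖z - z'‖ := by
  have hsub : effectiveHamiltonian 𝔖 𝔰 G z τ - effectiveHamiltonian 𝔖 𝔰 G z' τ =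
      (2 * (⟪z - z', G τ⟫_ℂ).re) • 𝔰 := by
    rw [effectiveHamiltonian, effectiveHamiltonian, add_sub_add_left_eq_sub, ← sub_smul,
      ← mul_sub, ← sub_re, ← inner_sub_left]
  have hre : |(⟪z - z', G τ⟫_ℂ).re| ≤ ‖z - z'‖ * ‖G τ‖ :=
    (abs_re_le_norm _).trans (norm_inner_le_norm _ _)
  calc ‖effectiveHamiltonian 𝔖 𝔰 G z τ - effectiveHamiltonian 𝔖 𝔰 G z' τ‖
      = 2 * |(⟪z - z', G τ⟫_ℂ).re| * ‖𝔰‖ := by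
        rw [hsub, norm_smul, Real.norm_eq_abs, abs_mul, abs_two]
    _ ≤ 2 * (‖z - z'‖ * ‖G τ‖) * ‖𝔰‖ := by gcongr
    _ = 2 * ‖G τ‖ * ‖𝔰‖ * ‖z - z'‖ := by ring

theorem effective_propagator_lipschitz_in_field_general [CompleteSpace ℋ]
    {𝔖 𝔰 : ℋ →L[ℂ] ℋ} (h𝔖 : IsSelfAdjoint 𝔖) (h𝔰 : IsSelfAdjoint 𝔰)
    {G : ℝ → 𝔥} (hG : Continuous G) {R : NNReal} (hGR : ∀ τ, ‖G τ‖ ≤ R)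
    {U : 𝔥 → ℝ → ℝ → (ℋ →L[ℂ] ℋ)}
    (hU : ∀ z, IsPropagator (effectiveHamiltonian 𝔖 𝔰 G z) (U z)) (t s : ℝ) :
    LipschitzWith (2 * R * ‖𝔰‖₊ * ‖t - s‖₊) fun z => U z t s := by
  refine .of_dist_le_mul fun z z' => ?_
  have hH (τ : ℝ) : ‖effectiveHamiltonian 𝔖 𝔰 G z τ - effectiveHamiltonian 𝔖 𝔰 G z' τ‖ ≤
      2 * R * ‖𝔰‖ * ‖z - z'‖ :=
    (norm_effectiveHamiltonian_sub_le 𝔖 𝔰 G z z' τ).trans (by gcongr; exact hGR τ)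
  calc dist (U z t s) (U z' t s) = ‖U z t s - U z' t s‖ := dist_eq_norm _ _
    _ ≤ 2 * R * ‖𝔰‖ * ‖z - z'‖ * |t - s| :=
        (hU z).norm_sub_le (hU z') (continuous_effectiveHamiltonian 𝔖 𝔰 hG z)
          (continuous_effectiveHamiltonian 𝔖 𝔰 hG z')
          (isSelfAdjoint_effectiveHamiltonian h𝔖 h𝔰 G z)
          (isSelfAdjoint_effectiveHamiltonian h𝔖 h𝔰 G z') fun τ _ => hH τ
    _ = ↑(2 * R * ‖𝔰‖₊ * ‖t - s‖₊) * dist z z' := by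
        rw [dist_eq_norm]
        push_cast
        rw [Real.norm_eq_abs]
        ring

end EffectiveHamiltonian

/-- Norm-Lipschitz dependence of the effective spin propagator
`𝔘_{t,0}(z)`, generated by `τ ↦ 𝔖 + 2Re⟨z, V_τ g⟩ 𝔰`, on the classical field configuration
`z`, with the explicit Lipschitz bound, and in particular continuity in `z`. -/
theorem effective_propagator_lipschitz_in_field
    {𝔥 : Type*} [NormedAddCommGroup 𝔥] [InnerProductSpace ℂ 𝔥] [CompleteSpace 𝔥]
    {ℋ : Type*} [NormedAddCommGroup ℋ] [InnerProductSpace ℂ ℋ] [CompleteSpace ℋ]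
    (𝔖 𝔰 : ℋ →L[ℂ] ℋ) (h𝔖 : IsSelfAdjoint 𝔖) (h𝔰 : IsSelfAdjoint 𝔰) (g : 𝔥)
    (V : ℝ → (𝔥 →L[ℂ] 𝔥))
    (hVunit : ∀ τ : ℝ, V τ ∈ unitary (𝔥 →L[ℂ] 𝔥))
    (hV0 : V 0 = 1) (hVgrp : ∀ σ τ : ℝ, V (σ + τ) = V σ * V τ)
    (hVcont : ∀ x : 𝔥, Continuous fun τ => V τ x)
    (U : 𝔥 → ℝ → ℝ → (ℋ →L[ℂ] ℋ))
    (hU : ∀ z : 𝔥,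
      IsPropagator (fun τ => 𝔖 + (2 * (⟪z, V τ g⟫_ℂ).re) • 𝔰) (U z)) :
    (∀ (t : ℝ) (z z' : 𝔥),
      ‖U z t 0 - U z' t 0‖ ≤
        2 * ‖g‖ * ‖𝔰‖ * |t| *
          Real.exp ((‖𝔖‖ + 2 * ‖g‖ * ‖𝔰‖ * ‖z'‖) * |t|) * ‖z - z'‖) ∧
    ∀ t : ℝ, Continuous fun z : 𝔥 => U z t 0 := by
  have hlip (t : ℝ) : LipschitzWith (2 * ‖g‖₊ * ‖𝔰‖₊ * ‖t - 0‖₊) fun z => U z t 0 :=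
    effective_propagator_lipschitz_in_field_general (R := ‖g‖₊) h𝔖 h𝔰 (hVcont g)
      (fun τ => (ContinuousLinearMap.norm_map_of_mem_unitary (hVunit τ) g).le) hU t 0
  refine ⟨fun t z z' => ?_, fun t => (hlip t).continuous⟩
  calc ‖U z t 0 - U z' t 0‖ ≤ 2 * ‖g‖ * ‖𝔰‖ * |t| * 1 * ‖z - z'‖ := by
        simpa using (hlip t).norm_sub_le z z'
    _ ≤ _ := by
        gcongr
        exact Real.one_le_exp (by positivity)
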